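/- For every integer w ≥ 3, ∑_{a+b=w, a≥2, b≥1} 2^{a−1}·( ζ(a,b̄) + ζ(ā,b̄) ) = ζ(w) + w·ζ(w̄). -/

import Mathlib

open Filter

/-- Depth-1 Euler sum `ζ(s; e) = ∑_{n ≥ 1} eⁿ / nˢ`,
defined as the limit of partial sums. `e = 1` gives `ζ(s)`, `e = -1` gives `ζ(s̄)`. -/
noncomputable def eulerSum1 (s : ℕ) (e : ℝ) : ℝ :=
  limUnder atTop (fun N : ℕ =>
    ∑ n ∈ Finset.Icc 1 N, e ^ n / (n : ℝ) ^ s)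

/-- Depth-2 Euler sum `ζ(s₁, s₂; e₁, e₂) = ∑_{n₁ > n₂ ≥ 1} e₁^{n₁} e₂^{n₂} / (n₁^{s₁} n₂^{s₂})`,
defined as the limit of iterated partial sums. A bar over an argument means the
corresponding sign is `-1`. -/
noncomputable def eulerSum2 (s₁ s₂ : ℕ) (e₁ e₂ : ℝ) : ℝ :=
  limUnder atTop (fun N : ℕ =>
    ∑ n₁ ∈ Finset.Icc 1 N, ∑ n₂ ∈ Finset.Ico 1 n₁,
      e₁ ^ n₁ * e₂ ^ n₂ / ((n₁ : ℝ) ^ s₁ * (n₂ : ℝ) ^ s₂))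

/-- Depth-3 Euler sum
`ζ(s₁, s₂, s₃; e₁, e₂, e₃) = ∑_{n₁ > n₂ > n₃ ≥ 1} e₁^{n₁} e₂^{n₂} e₃^{n₃} / (n₁^{s₁} n₂^{s₂} n₃^{s₃})`. -/
noncomputable def eulerSum3 (s₁ s₂ s₃ : ℕ) (e₁ e₂ e₃ : ℝ) : ℝ :=
  limUnder atTop (fun N : ℕ =>
    ∑ n₁ ∈ Finset.Icc 1 N, ∑ n₂ ∈ Finset.Ico 1 n₁, ∑ n₃ ∈ Finset.Ico 1 n₂,
      e₁ ^ n₁ * e₂ ^ n₂ * e₃ ^ n₃ / ((n₁ : ℝ) ^ s₁ * (n₂ : ℝ) ^ s₂ * (n₃ : ℝ) ^ s₃))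

/-- Depth-1 multiple T-value `T(s) = 2 ∑_{m odd, m ≥ 1} 1 / mˢ`. -/
noncomputable def tValue1 (s : ℕ) : ℝ :=
  limUnder atTop (fun N : ℕ =>
    ∑ m ∈ Finset.Icc 1 N, if m % 2 = 1 then 2 / (m : ℝ) ^ s else 0)

/-- Depth-2 multiple T-value
`T(s₁, s₂) = ∑_{m₁ > m₂ > 0, m₁ even, m₂ odd} 4 / (m₁^{s₁} m₂^{s₂})`. -/
noncomputable def tValue2 (s₁ s₂ : ℕ) : ℝ :=
  limUnder atTop (fun N : ℕ =>
    ∑ m₁ ∈ Finset.Icc 1 N, ∑ m₂ ∈ Finset.Ico 1 m₁,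
      if m₁ % 2 = 0 ∧ m₂ % 2 = 1 then 4 / ((m₁ : ℝ) ^ s₁ * (m₂ : ℝ) ^ s₂) else 0)

/-- Depth-3 multiple T-value
`T(s₁, s₂, s₃) = ∑_{m₁ > m₂ > m₃ > 0, m₁ odd, m₂ even, m₃ odd} 8 / (m₁^{s₁} m₂^{s₂} m₃^{s₃})`. -/
noncomputable def tValue3 (s₁ s₂ s₃ : ℕ) : ℝ :=
  limUnder atTop (fun N : ℕ =>
    ∑ m₁ ∈ Finset.Icc 1 N, ∑ m₂ ∈ Finset.Ico 1 m₁, ∑ m₃ ∈ Finset.Ico 1 m₂,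
      if m₁ % 2 = 1 ∧ m₂ % 2 = 0 ∧ m₃ % 2 = 1 then
        8 / ((m₁ : ℝ) ^ s₁ * (m₂ : ℝ) ^ s₂ * (m₃ : ℝ) ^ s₃) else 0)

open Finset in
/-- The partial sums over `Icc 1 N` of a summable sequence vanishing at `0` tend to its `tsum`. -/
theorem limUnder_sum_Icc_one {f : ℕ → ℝ} (hf : Summable f) (h0 : f 0 = 0) :
    limUnder atTop (fun N : ℕ => ∑ n ∈ Icc 1 N, f n) = ∑' n, f n := by
  refine Tendsto.limUnder_eq ?_
  have h := (tendsto_add_atTop_iff_nat 1).2 hf.hasSum.tendsto_sum_nat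
  refine h.congr fun N => ?_
  symm
  refine sum_subset (fun x hx => ?_) fun x hx hx' => ?_
  · simp only [mem_Icc, mem_range] at *; omega
  · obtain rfl : x = 0 := by simp only [mem_Icc, mem_range] at *; omega
    exact h0

theorem one_div_mul_mul_le_rpow {x y z : ℝ} (hx : 0 < x) (hy : 0 < y) (hz : 0 < z)
    (hyx : y ≤ 2 * x) (hzx : z ≤ 2 * x) :
    1 / (x * y * z) ≤ 2 * (y ^ (-(3 / 2) : ℝ) * z ^ (-(3 / 2) : ℝ)) := by
  have key : ∀ t : ℝ, 0 < t → t ^ (-(3 / 2) : ℝ) = 1 / (t * √t) := fun t ht => by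
    rw [Real.rpow_neg ht.le, one_div, Real.sqrt_eq_rpow,
      show (3 / 2 : ℝ) = 1 + 1 / 2 by norm_num, Real.rpow_add ht, Real.rpow_one]
  have hyz : √y * √z ≤ 2 * x := by
    rw [← Real.sqrt_mul hy.le]
    refine Real.sqrt_le_iff.2 ⟨by positivity, ?_⟩
    rw [sq]
    exact mul_le_mul hyx hzx hz.le (by positivity)
  have hy' := Real.sqrt_pos.2 hy
  have hz' := Real.sqrt_pos.2 hz
  rw [key y hy, key z hz, div_mul_div_comm, mul_one, mul_one_div,
    div_le_div_iff₀ (by positivity) (by positivity)]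
  have hyzp : 0 < y * z := by positivity
  nlinarith [mul_le_mul_of_nonneg_left hyz hyzp.le]

open Finset in
/-- The inner sums of a depth-2 Euler sum with first argument at least `2` are summable. -/
theorem summable_eulerSum2 {a b : ℕ} (ha : 2 ≤ a) (hb : 1 ≤ b) {e₁ e₂ : ℝ}
    (h₁ : |e₁| = 1) (h₂ : |e₂| = 1) :
    Summable fun n₁ : ℕ => ∑ n₂ ∈ Ico 1 n₁,
      e₁ ^ n₁ * e₂ ^ n₂ / ((n₁ : ℝ) ^ a * (n₂ : ℝ) ^ b) := by
  have hs : Summable fun n : ℕ => (n : ℝ) ^ (-(3 / 2) : ℝ) :=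
    Real.summable_nat_rpow.2 (by norm_num)
  refine Summable.of_norm_bounded
    (hs.mul_left (2 * ∑' n : ℕ, (n : ℝ) ^ (-(3 / 2) : ℝ))) fun n₁ => ?_
  refine (norm_sum_le _ _).trans ?_
  have hle : ∑ n₂ ∈ Ico 1 n₁, (n₂ : ℝ) ^ (-(3 / 2) : ℝ) ≤ ∑' n : ℕ, (n : ℝ) ^ (-(3 / 2) : ℝ) :=
    hs.sum_le_tsum _ fun n _ => by positivity
  calc _ ≤ ∑ n₂ ∈ Ico 1 n₁, 2 * ((n₁ : ℝ) ^ (-(3 / 2) : ℝ) * (n₂ : ℝ) ^ (-(3 / 2) : ℝ)) := by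
        refine sum_le_sum fun n₂ hn => ?_
        rw [mem_Ico] at hn
        have h2 : (1 : ℝ) ≤ n₂ := by exact_mod_cast hn.1
        have h21 : (n₂ : ℝ) ≤ n₁ := by exact_mod_cast hn.2.le
        refine le_trans ?_ (one_div_mul_mul_le_rpow (x := n₁) (by linarith) (by linarith)
          (by linarith) (by linarith) (by linarith))
        rw [Real.norm_eq_abs, abs_div, abs_mul, abs_pow, abs_pow, h₁, h₂, one_pow, one_pow,
          one_mul, abs_of_nonneg (by positivity)]
        have h1 : (0 : ℝ) < n₁ := by linarith
        refine one_div_le_one_div_of_le (by positivity) ?_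
        rw [← sq]
        exact mul_le_mul (pow_le_pow_right₀ (by linarith) ha)
          (by simpa using pow_le_pow_right₀ h2 hb) (by positivity) (by positivity)
    _ = 2 * (∑ n₂ ∈ Ico 1 n₁, (n₂ : ℝ) ^ (-(3 / 2) : ℝ)) * (n₁ : ℝ) ^ (-(3 / 2) : ℝ) := by
        rw [mul_sum, sum_mul]
        exact sum_congr rfl fun _ _ => by ring
    _ ≤ _ := by gcongr

open Finset in
/-- Averaging over the sign of the first argument keeps the even outer indices only. -/
theorem eulerSum2_add_eulerSum2_neg {a b : ℕ} (ha : 2 ≤ a) (hb : 1 ≤ b) :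
    HasSum (fun m : ℕ => ∑ n ∈ Ico 1 (2 * m), (-1 : ℝ) ^ n / ((m : ℝ) ^ a * (n : ℝ) ^ b))
      ((2 : ℝ) ^ (a - 1) * (eulerSum2 a b 1 (-1) + eulerSum2 a b (-1) (-1))) := by
  have hp := summable_eulerSum2 ha hb (e₁ := 1) (e₂ := -1) (by simp) (by simp)
  have hm := summable_eulerSum2 ha hb (e₁ := -1) (e₂ := -1) (by simp) (by simp)
  rw [eulerSum2, eulerSum2, limUnder_sum_Icc_one hp (by simp), limUnder_sum_Icc_one hm (by simp)]
  have h := (hp.hasSum.add hm.hasSum).mul_left ((2 : ℝ) ^ (a - 1))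
  have hinj : Function.Injective fun m : ℕ => 2 * m := fun x y h => by simpa using h
  rw [← hinj.hasSum_iff] at h
  · refine (congrArg (HasSum · _) (funext fun m => ?_)).mpr h
    rw [Function.comp_apply, ← sum_add_distrib, mul_sum]
    refine sum_congr rfl fun n hn => ?_
    obtain ⟨c, rfl⟩ : ∃ c, a = c + 1 := ⟨a - 1, by omega⟩
    rw [one_pow, pow_mul, neg_one_sq, one_pow, Nat.add_sub_cancel]
    push_cast
    rw [mul_pow, ← add_div, mul_div_assoc', mul_assoc, ← mul_div_mul_left _ _
      (show (2 : ℝ) ^ (c + 1) ≠ 0 by positivity)]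
    ring
  · intro n hn
    have hodd : Odd n := by
      rw [← Nat.not_even_iff_odd]
      rintro ⟨k, rfl⟩
      exact hn ⟨k, by simp [two_mul]⟩
    rw [← sum_add_distrib]
    simp only [hodd.neg_one_pow, one_pow]
    rw [sum_eq_zero, mul_zero]
    intro n _
    ring

open Finset in
theorem sum_Ico_neg_one_pow_div_sub (m : ℕ) :
    ∑ n ∈ Ico 1 (2 * m), (-1 : ℝ) ^ n / ((m : ℝ) - n) = 0 := by
  have h : ∑ n ∈ Ico 1 (2 * m), (-1 : ℝ) ^ n / ((m : ℝ) - n)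
      = ∑ n ∈ Ico 1 (2 * m), -((-1 : ℝ) ^ n / ((m : ℝ) - n)) := by
    refine sum_nbij' (fun n => 2 * m - n) (fun n => 2 * m - n) ?_ ?_ ?_ ?_ fun n hn => ?_
    any_goals (intro n hn; simp only [mem_Ico] at *; omega)
    rw [mem_Ico] at hn
    obtain ⟨k, hk⟩ : ∃ k, k + n = 2 * m := ⟨2 * m - n, by omega⟩
    rw [show 2 * m - n = k by omega]
    have hpow : (-1 : ℝ) ^ k = (-1 : ℝ) ^ n := by
      rcases Nat.even_or_odd n with h | h
      · rw [h.neg_one_pow, Even.neg_one_pow (by grind)]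
      · rw [h.neg_one_pow, Odd.neg_one_pow (by grind)]
    have hc : (k : ℝ) + n = 2 * m := by exact_mod_cast hk
    rw [hpow, ← div_neg]
    congr 1
    linarith
  rw [sum_neg_distrib] at h
  linarith

open Finset in
/-- The geometric sum over all `(a, b)` of fixed weight; the terms with denominator
`m - n` vanish on the diagonal `n = m`, as `x / 0 = 0`. -/
theorem sum_weight_eq {m n w : ℕ} (hw : 3 ≤ w) (hm : 0 < m) (hn : 0 < n) :
    ∑ a ∈ Icc 2 (w - 1), 1 / ((m : ℝ) ^ a * (n : ℝ) ^ (w - a))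
      = (if n = m then ((w : ℝ) - 2) / (m : ℝ) ^ w else 0)
        + (1 / ((n : ℝ) ^ (w - 2) * (m * ((m : ℝ) - n)))
          - 1 / ((m : ℝ) ^ (w - 1)) * (1 / ((m : ℝ) - n))) := by
  obtain ⟨v, rfl⟩ : ∃ v, w = v + 3 := ⟨w - 3, by omega⟩
  have hm' : (m : ℝ) ≠ 0 := by positivity
  have hn' : (n : ℝ) ≠ 0 := by positivity
  have hsum : ∑ a ∈ Icc 2 (v + 3 - 1), 1 / ((m : ℝ) ^ a * (n : ℝ) ^ (v + 3 - a))
      = (m : ℝ)⁻¹ ^ 2 * (n : ℝ)⁻¹ *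
        ∑ i ∈ range (v + 1), (m : ℝ)⁻¹ ^ i * (n : ℝ)⁻¹ ^ (v + 1 - 1 - i) := by
    rw [mul_sum]
    refine sum_nbij' (fun a => a - 2) (fun i => i + 2) ?_ ?_ ?_ ?_ fun a ha => ?_
    any_goals (intro n hn; simp only [mem_Icc, mem_range] at *; omega)
    rw [mem_Icc] at ha
    obtain ⟨i, rfl⟩ : ∃ i, a = i + 2 := ⟨a - 2, by omega⟩
    rw [show v + 3 - (i + 2) = (v + 1 - 1 - (i + 2 - 2)) + 1 by omega, Nat.add_sub_cancel i 2,
      one_div, mul_inv, ← inv_pow, ← inv_pow]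
    ring
  rw [hsum, show v + 3 - 2 = v + 1 by omega, show v + 3 - 1 = v + 2 by omega]
  by_cases h : n = m
  · subst h
    simp only [sub_self, mul_zero, div_zero, add_zero, if_true]
    rw [sum_congr rfl (g := fun _ => (n : ℝ)⁻¹ ^ v) fun i hi => ?_]
    · rw [sum_const, card_range, nsmul_eq_mul, div_eq_mul_inv, ← inv_pow]
      push_cast
      ring
    · rw [mem_range] at hi
      rw [← pow_add]
      congr 1
      omega
  · have hne : (m : ℝ) - n ≠ 0 := by
      rw [sub_ne_zero]
      exact_mod_cast Ne.symm h
    have hg := (Commute.all (m : ℝ)⁻¹ (n : ℝ)⁻¹).geom_sum₂_mul (v + 1)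
    have hd : (m : ℝ)⁻¹ - (n : ℝ)⁻¹ = -((m : ℝ) - n) * ((m : ℝ)⁻¹ * (n : ℝ)⁻¹) := by
      field_simp
      ring
    rw [if_neg h, zero_add]
    rw [hd] at hg
    generalize ∑ i ∈ range (v + 1), (m : ℝ)⁻¹ ^ i * (n : ℝ)⁻¹ ^ (v + 1 - 1 - i) = S at hg ⊢
    have hS : S = ((n : ℝ)⁻¹ ^ (v + 1) - (m : ℝ)⁻¹ ^ (v + 1)) * (m * n) / ((m : ℝ) - n) := by
      rw [eq_div_iff hne]
      rw [← neg_sub ((m : ℝ)⁻¹ ^ (v + 1)), ← hg]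
      field_simp
    rw [hS]
    simp only [inv_pow]
    field_simp
    ring

open Finset in
theorem sum_sum_weight_eq {w : ℕ} (hw : 3 ≤ w) (m : ℕ) :
    ∑ a ∈ Icc 2 (w - 1), ∑ n ∈ Ico 1 (2 * m),
        (-1 : ℝ) ^ n / ((m : ℝ) ^ a * (n : ℝ) ^ (w - a))
      = ((w : ℝ) - 2) * ((-1) ^ m / (m : ℝ) ^ w)
        + ∑ n ∈ Ico 1 (2 * m), (-1 : ℝ) ^ n / ((n : ℝ) ^ (w - 2) * (m * ((m : ℝ) - n))) := by
  rcases Nat.eq_zero_or_pos m with rfl | hm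
  · simp [show w ≠ 0 by omega]
  rw [sum_comm]
  calc _ = ∑ n ∈ Ico 1 (2 * m), ((if n = m then (-1) ^ n * (((w : ℝ) - 2) / (m : ℝ) ^ w) else 0)
        + ((-1 : ℝ) ^ n / ((n : ℝ) ^ (w - 2) * (m * ((m : ℝ) - n)))
          - 1 / ((m : ℝ) ^ (w - 1)) * ((-1 : ℝ) ^ n / ((m : ℝ) - n)))) := by
        refine sum_congr rfl fun n hn => ?_
        rw [mem_Ico] at hn
        have h := congrArg ((-1 : ℝ) ^ n * ·) (sum_weight_eq hw hm hn.1)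
        simp only [mul_sum, mul_one_div] at h
        rw [h, mul_add, mul_ite, mul_zero]
        ring
    _ = _ := by
        rw [sum_add_distrib, sum_sub_distrib, ← mul_sum, sum_Ico_neg_one_pow_div_sub,
          sum_ite_eq', if_pos (by rw [mem_Ico]; omega)]
        ring

open Finset in
theorem sum_range_one_div_mul_sub {n : ℕ} (hn : 0 < n) :
    ∑ m ∈ range (n + 1), (if n ∈ Ico 1 (2 * m) then (n : ℝ) / (m * ((m : ℝ) - n)) else 0)
      = (2 + (-1) ^ n) / n - ∑ i ∈ range n, 1 / ((i : ℝ) + 1) := by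
  have hn' : (n : ℝ) ≠ 0 := by positivity
  have hsplit : ∑ m ∈ range (n + 1),
      (if n ∈ Ico 1 (2 * m) then (n : ℝ) / (m * ((m : ℝ) - n)) else 0)
      = -(∑ m ∈ Ico 1 n, (if n < 2 * m then 1 / ((n - m : ℕ) : ℝ) else 0)
        + ∑ m ∈ Ico 1 n, (if n < 2 * m then 1 / (m : ℝ) else 0)) := by
    rw [sum_range_succ, sub_self, mul_zero, div_zero, ite_self, add_zero, range_eq_Ico,
      sum_eq_sum_Ico_succ_bot hn, if_neg (by simp), zero_add, ← sum_add_distrib,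
      ← sum_neg_distrib]
    refine sum_congr rfl fun m hm => ?_
    rw [mem_Ico] at hm
    by_cases h : n < 2 * m
    · rw [if_pos (by rw [mem_Ico]; omega), if_pos h, if_pos h, Nat.cast_sub hm.2.le]
      have hm0 : (m : ℝ) ≠ 0 := by exact_mod_cast (by omega : m ≠ 0)
      have hmn : (m : ℝ) - n ≠ 0 := sub_ne_zero.2 (by exact_mod_cast hm.2.ne)
      have hnm : (n : ℝ) - m ≠ 0 := sub_ne_zero.2 (by exact_mod_cast hm.2.ne')
      field_simp
      ring
    · rw [if_neg (by rw [mem_Ico]; omega), if_neg h, if_neg h]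
      simp
  have hreflect : ∑ m ∈ Ico 1 n, (if n < 2 * m then 1 / ((n - m : ℕ) : ℝ) else 0)
      = ∑ m ∈ Ico 1 n, (if 2 * m < n then 1 / (m : ℝ) else 0) := by
    refine sum_nbij' (fun m => n - m) (fun m => n - m) ?_ ?_ ?_ ?_ fun m hm => ?_
    any_goals (intro m hm; simp only [mem_Ico] at *; omega)
    rw [mem_Ico] at hm
    exact if_congr (by omega) rfl rfl
  have hdiag : ∑ m ∈ Ico 1 n, (if 2 * m = n then 1 / (m : ℝ) else 0) = (1 + (-1) ^ n) / n := by
    rcases Nat.even_or_odd' n with ⟨p, rfl | rfl⟩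
    · rw [sum_eq_single_of_mem p (by rw [mem_Ico]; omega) fun b _ hb => if_neg (by omega),
        if_pos rfl, pow_mul, neg_one_sq, one_pow]
      push_cast at hn' ⊢
      field_simp
      norm_num
    · rw [sum_eq_zero fun b _ => if_neg (by omega), pow_succ, pow_mul]
      simp
  have hharm : ∑ i ∈ range n, 1 / ((i : ℝ) + 1) = ∑ m ∈ Ico 1 n, 1 / (m : ℝ) + 1 / n := by
    rw [← sum_Ico_succ_top (f := fun m : ℕ => 1 / (m : ℝ)) hn, sum_Ico_eq_sum_range]
    exact sum_congr (by simp) fun i _ => by push_cast; ring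
  have htri : ∑ m ∈ Ico 1 n, 1 / (m : ℝ)
      = ∑ m ∈ Ico 1 n, (if 2 * m < n then 1 / (m : ℝ) else 0)
        + ∑ m ∈ Ico 1 n, (if n < 2 * m then 1 / (m : ℝ) else 0)
        + ∑ m ∈ Ico 1 n, (if 2 * m = n then 1 / (m : ℝ) else 0) := by
    rw [← sum_add_distrib, ← sum_add_distrib]
    refine sum_congr rfl fun m _ => ?_
    rcases lt_trichotomy (2 * m) n with h | h | h
    · simp [h, h.ne, h.le.not_gt]
    · simp [h]
    · simp [h, h.ne', h.le.not_gt]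
  rw [hsplit, hreflect, hharm, htri, hdiag]
  ring

open Finset in
theorem tendsto_sum_one_div_mul_sub {n : ℕ} (hn : 0 < n) :
    Tendsto (fun M => ∑ m ∈ range M,
      (if n ∈ Ico 1 (2 * m) then (n : ℝ) / (m * ((m : ℝ) - n)) else 0)) atTop
      (nhds ((2 + (-1) ^ n) / n)) := by
  rw [← tendsto_add_atTop_iff_nat (n + 1)]
  have hval : ∀ K : ℕ, ∑ m ∈ range (K + (n + 1)),
      (if n ∈ Ico 1 (2 * m) then (n : ℝ) / (m * ((m : ℝ) - n)) else 0)
      = (2 + (-1) ^ n) / n - ∑ i ∈ range n, 1 / (((K + i : ℕ) : ℝ) + 1) := by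
    intro K
    have hK : ∑ k ∈ range K, (if n ∈ Ico 1 (2 * (n + 1 + k)) then
        (n : ℝ) / ((n + 1 + k : ℕ) * (((n + 1 + k : ℕ) : ℝ) - n)) else 0)
        = ∑ k ∈ range K, 1 / ((k : ℝ) + 1) - ∑ k ∈ range K, 1 / (((n + k : ℕ) : ℝ) + 1) := by
      rw [← sum_sub_distrib]
      refine sum_congr rfl fun k _ => ?_
      rw [if_pos (by rw [mem_Ico]; omega)]
      push_cast
      rw [show (n : ℝ) + 1 + k - n = k + 1 by ring]
      have h1 : (k : ℝ) + 1 ≠ 0 := by positivity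
      have h2 : (n : ℝ) + 1 + k ≠ 0 := by positivity
      have h3 : (n : ℝ) + k + 1 ≠ 0 := by positivity
      field_simp
      ring
    have e1 := sum_range_add (fun i : ℕ => 1 / ((i : ℝ) + 1)) n K
    have e2 := sum_range_add (fun i : ℕ => 1 / ((i : ℝ) + 1)) K n
    rw [add_comm K n] at e2
    rw [add_comm K, sum_range_add, sum_range_one_div_mul_sub hn, hK]
    linarith
  simp only [hval]
  have hlim : Tendsto (fun K : ℕ => ∑ i ∈ range n, 1 / (((K + i : ℕ) : ℝ) + 1)) atTop
      (nhds (∑ i ∈ range n, (0 : ℝ))) :=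
    tendsto_finsetSum _ fun i _ =>
      (tendsto_add_atTop_iff_nat i).2 tendsto_one_div_add_atTop_nhds_zero_nat
  simpa using hlim.const_sub ((2 + (-1 : ℝ) ^ n) / n)

open Finset in
theorem summable_prod_div_mul_sub {k : ℕ} (hk : 1 ≤ k) :
    Summable fun p : ℕ × ℕ => if p.2 ∈ Ico 1 (2 * p.1) then
      (-1 : ℝ) ^ p.2 / ((p.2 : ℝ) ^ k * (p.1 * ((p.1 : ℝ) - p.2))) else 0 := by
  have hs : Summable fun n : ℕ => (n : ℝ) ^ (-(3 / 2) : ℝ) :=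
    Real.summable_nat_rpow.2 (by norm_num)
  have hz : Summable fun j : ℤ => |(j : ℝ)| ^ (-(3 / 2) : ℝ) :=
    Real.summable_abs_int_rpow (by norm_num)
  have hprod := (hz.mul_of_nonneg hs (fun j => by positivity) fun n => by positivity).mul_left 2
  have hinj : Function.Injective fun p : ℕ × ℕ => ((p.1 : ℤ) - p.2, p.2) := by
    rintro ⟨a, b⟩ ⟨c, d⟩ h
    simp only [Prod.mk.injEq] at h ⊢
    omega
  refine Summable.of_norm_bounded (hprod.comp_injective hinj) ?_
  rintro ⟨m, n⟩
  simp only [Function.comp_apply]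
  split_ifs with h
  · rw [mem_Ico] at h
    rcases eq_or_ne m n with rfl | hne
    · simp only [sub_self, mul_zero, div_zero, norm_zero]
      positivity
    have hn : (1 : ℝ) ≤ n := by exact_mod_cast h.1
    have hnm : (n : ℝ) < 2 * m := by exact_mod_cast h.2
    have hsub : (m : ℝ) - n ≠ 0 := sub_ne_zero.2 (by exact_mod_cast hne)
    have habs : |(m : ℝ) - n| ≤ 2 * m := abs_le.2 ⟨by linarith, by linarith⟩
    have hpos := abs_pos.2 hsub
    push_cast
    refine le_trans ?_ (one_div_mul_mul_le_rpow (x := m) (by linarith) hpos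
      (by linarith) habs hnm.le)
    rw [Real.norm_eq_abs, abs_div, abs_mul, abs_mul, abs_pow, abs_neg, abs_one, one_pow,
      abs_of_nonneg (show (0 : ℝ) ≤ (n : ℝ) ^ k by positivity), Nat.abs_cast, mul_comm _ (n : ℝ),
      mul_comm ((n : ℝ) ^ k), mul_comm (n : ℝ)]
    have hm : (0 : ℝ) < m := by linarith
    refine one_div_le_one_div_of_le (by positivity) ?_
    gcongr
    simpa using pow_le_pow_right₀ hn hk
  · rw [norm_zero]
    positivity

open Finset in
theorem tsum_neg_one_pow_div_mul_sub {w : ℕ} (hw : 3 ≤ w) (n : ℕ) :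
    ∑' m : ℕ, (if n ∈ Ico 1 (2 * m) then
      (-1 : ℝ) ^ n / ((n : ℝ) ^ (w - 2) * (m * ((m : ℝ) - n))) else 0)
      = 1 ^ n / (n : ℝ) ^ w + 2 * ((-1) ^ n / (n : ℝ) ^ w) := by
  rcases Nat.eq_zero_or_pos n with rfl | hn
  · simp [show w ≠ 0 by omega]
  have hs := (summable_prod_div_mul_sub (k := w - 2) (by omega)).comp_injective
    (Prod.mk_left_injective n)
  refine tendsto_nhds_unique hs.hasSum.tendsto_sum_nat ?_
  have h := (tendsto_sum_one_div_mul_sub hn).const_mul ((-1 : ℝ) ^ n / (n : ℝ) ^ (w - 1))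
  obtain ⟨v, rfl⟩ : ∃ v, w = v + 3 := ⟨w - 3, by omega⟩
  have hn' : (n : ℝ) ≠ 0 := by positivity
  rw [show v + 3 - 1 = v + 1 + 1 by omega] at h
  rw [show v + 3 - 2 = v + 1 by omega]
  have hsq : ((-1 : ℝ) ^ n) * (-1) ^ n = 1 := by rw [← mul_pow]; simp
  convert h using 2
  · rw [mul_sum]
    refine sum_congr rfl fun m _ => ?_
    simp only [Function.comp_apply, mul_ite, mul_zero]
    congr 1
    rw [div_mul_div_comm, pow_succ (n : ℝ) (v + 1), mul_comm ((-1 : ℝ) ^ n) (n : ℝ),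
      mul_comm ((n : ℝ) ^ (v + 1)) n, mul_assoc, mul_div_mul_left _ _ hn']
  · rw [div_mul_div_comm, mul_add, hsq, ← pow_succ, one_pow]
    ring

theorem summable_eulerSum1 {w : ℕ} (hw : 2 ≤ w) {e : ℝ} (he : |e| = 1) :
    Summable fun n : ℕ => e ^ n / (n : ℝ) ^ w := by
  refine Summable.of_norm_bounded (Real.summable_one_div_nat_pow.2 (show 1 < w by omega))
    fun n => ?_
  rw [norm_div, norm_pow, norm_pow, Real.norm_eq_abs, he, one_pow, Real.norm_natCast]

/-- For `w ≥ 3`: `∑_{a+b=w, a≥2} 2^{a−1}(ζ(a,b̄) + ζ(ā,b̄)) = ζ(w) + w ζ(w̄)`. -/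
theorem weighted_sum_mixed (w : ℕ) (hw : 3 ≤ w) :
    ∑ a ∈ Finset.Icc 2 (w - 1),
        (2 : ℝ) ^ (a - 1) * (eulerSum2 a (w - a) 1 (-1) + eulerSum2 a (w - a) (-1) (-1))
      = eulerSum1 w 1 + (w : ℝ) * eulerSum1 w (-1) := by
  have hp := summable_eulerSum1 (w := w) (by omega) (e := 1) (by simp)
  have hm := summable_eulerSum1 (w := w) (by omega) (e := -1) (by simp)
  rw [eulerSum1, eulerSum1, limUnder_sum_Icc_one hp (by simp [show w ≠ 0 by omega]),
    limUnder_sum_Icc_one hm (by simp [show w ≠ 0 by omega])]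
  have hL := hasSum_sum (s := Finset.Icc 2 (w - 1)) fun a ha =>
    eulerSum2_add_eulerSum2_neg (a := a) (b := w - a)
      (Finset.mem_Icc.1 ha).1 (by have := (Finset.mem_Icc.1 ha).2; omega)
  simp only [sum_sum_weight_eq hw] at hL
  let g : ℕ → ℕ → ℝ := fun m n => if n ∈ Finset.Ico 1 (2 * m) then
    (-1 : ℝ) ^ n / ((n : ℝ) ^ (w - 2) * (m * ((m : ℝ) - n))) else 0
  have hG : Summable (Function.uncurry g) := summable_prod_div_mul_sub (k := w - 2) (by omega)
  have hrow : ∀ m : ℕ, ∑ n ∈ Finset.Ico 1 (2 * m),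
      (-1 : ℝ) ^ n / ((n : ℝ) ^ (w - 2) * (m * ((m : ℝ) - n))) = ∑' n, g m n := fun m => by
    rw [tsum_eq_sum (s := Finset.Ico 1 (2 * m)) fun n hn => if_neg hn]
    exact Finset.sum_congr rfl fun n hn => (if_pos hn).symm
  have hcol : ∀ n : ℕ, ∑' m, g m n = 1 ^ n / (n : ℝ) ^ w + 2 * ((-1) ^ n / (n : ℝ) ^ w) :=
    tsum_neg_one_pow_div_mul_sub hw
  simp only [hrow] at hL
  have hGrow : Summable fun m => ∑' n, g m n := hG.prod
  rw [← hL.tsum_eq, (hm.mul_left _).tsum_add hGrow, tsum_mul_left, ← hG.tsum_comm]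
  simp only [hcol]
  rw [hp.tsum_add (hm.mul_left 2), tsum_mul_left]
  ring
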